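/- There exists an injective group homomorphism φ from the dihedral group D_{4n} of order 8n into the group of bijections of A = A'/⟨w⟩ such that: (1) for every g ∈ D_{4n}, φ(g) is an affine transformation of A, i.e., of the form x ↦ α(x) + a for some additive automorphism α of A and some a ∈ A; (2) for every g ≠ 1 in D_{4n}, φ(g) has no fixed points on A; and (3) for every g ≠ 1 in D_{4n}, φ(g) is not a translation, i.e., not of the form x ↦ x + a. -/

import Mathlib

noncomputable section

/-- The lattice Λ = ℤ + ℤτ as an additive subgroup of ℂ. -/
def Lam (τ : ℂ) : AddSubgroup ℂ := AddSubgroup.closure {1, τ}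

/-- The "elliptic curve" E = ℂ/(ℤ + ℤτ) as an additive group. -/
abbrev Ell (τ : ℂ) : Type := ℂ ⧸ Lam τ

/-- A' = E^{2n} × E'. -/
abbrev Aprime (n : ℕ) (τ τ' : ℂ) : Type := (Fin (2*n) → Ell τ) × Ell τ'

/-- w = (1/2, 1/2, ..., 1/2, 0) ∈ A'. -/
def wpt (n : ℕ) (τ τ' : ℂ) : Aprime n τ τ' :=
  (fun _ => ((1/2 : ℂ) : Ell τ), 0)

/-- The subgroup ⟨w⟩ of A' generated by w. -/
def wsub (n : ℕ) (τ τ' : ℂ) : AddSubgroup (Aprime n τ τ') :=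
  AddSubgroup.closure {wpt n τ τ'}

/-- A = A'/⟨w⟩. -/
abbrev Aq (n : ℕ) (τ τ' : ℂ) : Type := Aprime n τ τ' ⧸ wsub n τ τ'

/-- R(z₁,...,z_{2n},z_{2n+1}) = (-z_{2n}, z₁, ..., z_{2n-1}, z_{2n+1}). -/
def Rmap (n : ℕ) (τ τ' : ℂ) : Aprime n τ τ' → Aprime n τ τ' :=
  fun z => (fun i =>
    if i.val = 0 then -z.1 ⟨2*n-1, by have := i.isLt; omega⟩
    else z.1 ⟨i.val - 1, by have := i.isLt; omega⟩, z.2)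

/-- The class of 1/(4n) in E'. -/
def cE' (n : ℕ) (τ' : ℂ) : Ell τ' := ((1/(4*(n : ℂ)) : ℂ) : Ell τ')

/-- r(z) = R(z) + (0, ..., 0, 1/(4n)). -/
def rmap (n : ℕ) (τ τ' : ℂ) : Aprime n τ τ' → Aprime n τ τ' :=
  fun z => ((Rmap n τ τ' z).1, (Rmap n τ τ' z).2 + cE' n τ')

/-- The translation vector b: b_{2i-1} = 1/2 + τ/2, b_{2i} = τ/2 (1-indexed),
i.e. in 0-indexed terms, even indices carry 1/2 + τ/2 and odd indices carry τ/2. -/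
def bvec (n : ℕ) (τ : ℂ) : Fin (2*n) → Ell τ :=
  fun i => if i.val % 2 = 0 then ((1/2 + τ/2 : ℂ) : Ell τ) else ((τ/2 : ℂ) : Ell τ)

/-- S(z₁,...,z_{2n},z_{2n+1}) = (-z_{2n}, -z_{2n-1}, ..., -z₁, -z_{2n+1}). -/
def Smap (n : ℕ) (τ τ' : ℂ) : Aprime n τ τ' → Aprime n τ τ' :=
  fun z => (fun i => -z.1 ⟨2*n-1-i.val, by have := i.isLt; omega⟩, -z.2)

/-- s(z) = S(z) + (b₁, ..., b_{2n}, 0). -/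
def smap (n : ℕ) (τ τ' : ℂ) : Aprime n τ τ' → Aprime n τ τ' :=
  fun z => (fun i => -z.1 ⟨2*n-1-i.val, by have := i.isLt; omega⟩ + bvec n τ i, -z.2)

theorem Lam_mem {τ : ℂ} (hτ : τ.im ≠ 0) {a b : ℝ} (h : (a : ℂ) + b * τ ∈ Lam τ) :
    ∃ k l : ℤ, a = k ∧ b = l := by
  unfold Lam at h
  rw [AddSubgroup.mem_closure_pair] at h
  obtain ⟨k, l, h⟩ := h
  have him := congrArg Complex.im h
  have hre := congrArg Complex.re h
  simp at him hre
  have hb : b = l := by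
    rcases him with h | h
    · exact h.symm
    · exact absurd h hτ
  subst hb
  refine ⟨k, l, ?_, rfl⟩
  linarith

theorem Ell_zero {τ : ℂ} (hτ : τ.im ≠ 0) {z : ℂ} (a b : ℝ) (h : (z : Ell τ) = 0)
    (hz : z = (a : ℂ) + b * τ) :
    ∃ k l : ℤ, a = k ∧ b = l := by
  rw [QuotientAddGroup.eq_zero_iff, hz] at h
  exact Lam_mem hτ h

theorem one_mem_Lam (τ : ℂ) : (1 : ℂ) ∈ Lam τ := AddSubgroup.subset_closure (by simp)

theorem tau_mem_Lam (τ : ℂ) : τ ∈ Lam τ := AddSubgroup.subset_closure (by simp)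

theorem half_add_half (τ : ℂ) : ((1/2 : ℂ) : Ell τ) + ((1/2 : ℂ) : Ell τ) = 0 := by
  rw [← QuotientAddGroup.mk_add, QuotientAddGroup.eq_zero_iff]
  convert one_mem_Lam τ using 1
  norm_num

theorem tau_add_tau (τ : ℂ) : ((τ/2 : ℂ) : Ell τ) + ((τ/2 : ℂ) : Ell τ) = 0 := by
  rw [← QuotientAddGroup.mk_add, QuotientAddGroup.eq_zero_iff]
  convert tau_mem_Lam τ using 1
  ring

theorem neg_half (τ : ℂ) : -((1/2 : ℂ) : Ell τ) = ((1/2 : ℂ) : Ell τ) :=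
  neg_eq_of_add_eq_zero_left (half_add_half τ)

theorem Aq_eq {n : ℕ} {τ τ' : ℂ} {x y : Aprime n τ τ'} :
    (x : Aq n τ τ') = (y : Aq n τ τ') ↔ ∃ m : ℤ, m • wpt n τ τ' = y - x := by
  rw [QuotientAddGroup.eq, wsub, AddSubgroup.mem_closure_singleton, neg_add_eq_sub]

def Rhom (n : ℕ) (τ τ' : ℂ) : Aprime n τ τ' →+ Aprime n τ τ' where
  toFun := Rmap n τ τ'
  map_zero' := by
    ext i <;> simp [Rmap]
  map_add' x y := by
    ext i
    · simp only [Rmap, Prod.fst_add, Pi.add_apply]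
      split_ifs <;> abel
    · simp [Rmap]

def Shom (n : ℕ) (τ τ' : ℂ) : Aprime n τ τ' →+ Aprime n τ τ' where
  toFun := Smap n τ τ'
  map_zero' := by
    ext i <;> simp [Smap]
  map_add' x y := by
    ext i
    · simp only [Smap, Prod.fst_add, Pi.add_apply]
      abel
    · simp only [Smap, Prod.snd_add]
      abel

theorem Rhom_w (n : ℕ) (τ τ' : ℂ) : Rhom n τ τ' (wpt n τ τ') = wpt n τ τ' := by
  ext i
  · simp only [Rhom, wpt, Rmap, AddMonoidHom.coe_mk, ZeroHom.coe_mk, neg_half, ite_self]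
  · rfl

theorem Shom_w (n : ℕ) (τ τ' : ℂ) : Shom n τ τ' (wpt n τ τ') = wpt n τ τ' := by
  ext i
  · simp only [Shom, wpt, Smap, AddMonoidHom.coe_mk, ZeroHom.coe_mk, neg_half]
  · simp [Shom, wpt, Smap]

theorem le_comap_of_fix (n : ℕ) (τ τ' : ℂ) (f : Aprime n τ τ' →+ Aprime n τ τ')
    (h : f (wpt n τ τ') = wpt n τ τ') : wsub n τ τ' ≤ (wsub n τ τ').comap f := by
  unfold wsub
  rw [AddSubgroup.closure_le]
  rintro x rfl
  show f (wpt n τ τ') ∈ AddSubgroup.closure {wpt n τ τ'}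
  rw [h]
  exact AddSubgroup.subset_closure rfl

def RA (n : ℕ) (τ τ' : ℂ) : Aq n τ τ' →+ Aq n τ τ' :=
  QuotientAddGroup.map _ _ (Rhom n τ τ') (le_comap_of_fix n τ τ' _ (Rhom_w n τ τ'))

def SA (n : ℕ) (τ τ' : ℂ) : Aq n τ τ' →+ Aq n τ τ' :=
  QuotientAddGroup.map _ _ (Shom n τ τ') (le_comap_of_fix n τ τ' _ (Shom_w n τ τ'))

def pA (n : ℕ) (τ τ' : ℂ) (x : Aq n τ τ') : Aq n τ τ' :=
  RA n τ τ' x + (((0, cE' n τ') : Aprime n τ τ') : Aq n τ τ')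

def qA (n : ℕ) (τ τ' : ℂ) (x : Aq n τ τ') : Aq n τ τ' :=
  SA n τ τ' x + (((bvec n τ, 0) : Aprime n τ τ') : Aq n τ τ')

theorem pA_mk (n : ℕ) (τ τ' : ℂ) (z : Aprime n τ τ') :
    pA n τ τ' (z : Aq n τ τ') = (rmap n τ τ' z : Aprime n τ τ') := by
  have : rmap n τ τ' z = Rhom n τ τ' z + (0, cE' n τ') := by
    ext i
    · simp [rmap, Rhom]
    · simp [rmap, Rhom]
  rw [this]
  rfl

theorem qA_mk (n : ℕ) (τ τ' : ℂ) (z : Aprime n τ τ') :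
    qA n τ τ' (z : Aq n τ τ') = (smap n τ τ' z : Aprime n τ τ') := by
  have : smap n τ τ' z = Shom n τ τ' z + (bvec n τ, 0) := by
    ext i
    · simp [smap, Shom, Smap]
    · simp [smap, Shom, Smap]
  rw [this]
  rfl

theorem pA_iter_mk (n : ℕ) (τ τ' : ℂ) (k : ℕ) (z : Aprime n τ τ') :
    (pA n τ τ')^[k] (z : Aq n τ τ') = ((rmap n τ τ')^[k] z : Aprime n τ τ') := by
  induction k generalizing z with
  | zero => rfl
  | succ k ih => rw [Function.iterate_succ_apply, Function.iterate_succ_apply, pA_mk, ih]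

theorem rmap_iter_snd (n : ℕ) (τ τ' : ℂ) (k : ℕ) (z : Aprime n τ τ') :
    ((rmap n τ τ')^[k] z).2 = z.2 + k • cE' n τ' := by
  induction k with
  | zero => simp
  | succ k ih =>
    rw [Function.iterate_succ_apply', rmap]
    simp only [Rmap]
    rw [ih, succ_nsmul, add_assoc]

theorem rmap_iter_fst (n : ℕ) (τ τ' : ℂ) (k : ℕ) (hk : k ≤ 2*n) (z : Aprime n τ τ')
    (i : Fin (2*n)) :
    ((rmap n τ τ')^[k] z).1 i = if h : i.val < k then
      -z.1 ⟨2*n + i.val - k, by omega⟩ else z.1 ⟨i.val - k, by omega⟩ := by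
  induction k generalizing i with
  | zero => simp
  | succ k ih =>
    rw [Function.iterate_succ_apply', rmap]
    simp only [Rmap]
    have hi := i.isLt
    by_cases h0 : i.val = 0
    · rw [if_pos h0, ih (by omega), dif_neg (by simp; omega), dif_pos (by omega)]
      exact congrArg (fun j => -z.1 j) (Fin.ext (by dsimp only; omega))
    · rw [if_neg h0, ih (by omega)]
      by_cases h1 : i.val < k + 1
      · rw [dif_pos h1, dif_pos (by simp; omega)]
        exact congrArg (fun j => -z.1 j) (Fin.ext (by dsimp only; omega))
      · rw [dif_neg h1, dif_neg (by simp; omega)]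
        exact congrArg (fun j => z.1 j) (Fin.ext (by dsimp only; omega))

theorem rmap_2n_fst (n : ℕ) (τ τ' : ℂ) (z : Aprime n τ τ') :
    ((rmap n τ τ')^[2*n] z).1 = -z.1 := by
  ext i
  rw [rmap_iter_fst n τ τ' _ le_rfl, dif_pos i.isLt]
  simp

theorem nsmul_c (n : ℕ) (τ' : ℂ) (k : ℕ) :
    k • cE' n τ' = ((k / (4 * n) : ℂ) : Ell τ') := by
  rw [cE', ← QuotientAddGroup.mk_nsmul]
  congr 1
  simp
  ring

theorem c_4n (n : ℕ) (hn : 1 ≤ n) (τ' : ℂ) : (4*n) • cE' n τ' = 0 := by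
  rw [nsmul_c, QuotientAddGroup.eq_zero_iff]
  convert one_mem_Lam τ' using 1
  have : (n : ℂ) ≠ 0 := by exact_mod_cast (by omega : n ≠ 0)
  push_cast
  field_simp

theorem rmap_4n (n : ℕ) (hn : 1 ≤ n) (τ τ' : ℂ) (z : Aprime n τ τ') :
    (rmap n τ τ')^[4*n] z = z := by
  refine Prod.ext ?_ ?_
  · rw [show 4*n = 2*n+2*n by ring, Function.iterate_add_apply, rmap_2n_fst, rmap_2n_fst, neg_neg]
  · rw [rmap_iter_snd, c_4n n hn, add_zero]

theorem pA_4n (n : ℕ) (hn : 1 ≤ n) (τ τ' : ℂ) (x : Aq n τ τ') :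
    (pA n τ τ')^[4*n] x = x := by
  induction x using QuotientAddGroup.induction_on with
  | H z => rw [pA_iter_mk, rmap_4n n hn]

theorem bvec_sub (n : ℕ) (τ : ℂ) (i : Fin (2*n)) (h : 2*n-1-i.val < 2*n) :
    bvec n τ i - bvec n τ ⟨2*n-1-i.val, h⟩ = ((1/2 : ℂ) : Ell τ) := by
  have hi := i.isLt
  unfold bvec
  by_cases h0 : i.val % 2 = 0
  · rw [if_pos h0, if_neg (by simp; omega), QuotientAddGroup.mk_add]
    abel
  · rw [if_neg h0, if_pos (by simp; omega), QuotientAddGroup.mk_add]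
    refine Eq.trans ?_ (neg_half τ)
    abel

theorem qA_qA (n : ℕ) (τ τ' : ℂ) (x : Aq n τ τ') : qA n τ τ' (qA n τ τ' x) = x := by
  induction x using QuotientAddGroup.induction_on with
  | H z =>
    rw [qA_mk, qA_mk]
    symm
    rw [Aq_eq]
    refine ⟨1, ?_⟩
    rw [one_zsmul]
    refine Prod.ext ?_ ?_
    · funext i
      have hi := i.isLt
      have h2 : (⟨2*n-1-(2*n-1-i.val), by omega⟩ : Fin (2*n)) = i := by
        ext; simp; omega
      simp only [smap, wpt, Prod.fst_sub, Pi.sub_apply]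
      rw [h2, ← bvec_sub n τ i (by omega)]
      abel
    · simp [smap, wpt]

theorem rs_sq (n : ℕ) (τ τ' : ℂ) (z : Aprime n τ τ') :
    rmap n τ τ' (smap n τ τ' (rmap n τ τ' (smap n τ τ' z))) = z := by
  refine Prod.ext ?_ ?_
  · funext i
    have hi := i.isLt
    by_cases h0 : i.val = 0
    · have hz : 2*n-1-(2*n-1) = 0 := by omega
      have e1 : (⟨2*n-1-(2*n-1), by omega⟩ : Fin (2*n)) = i := by
        ext; simp; omega
      have e2 : bvec n τ ⟨2*n-1, by omega⟩ = ((τ/2 : ℂ) : Ell τ) := by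
        unfold bvec
        rw [if_neg (by simp; omega)]
      simp only [smap, rmap, Rmap, if_pos h0, if_pos hz, e1, e2]
      rw [← sub_eq_zero, ← neg_eq_zero, ← tau_add_tau τ]
      abel
    · have hne : ¬ (2*n-1-(i.val-1) = 0) := by omega
      have e1 : (⟨2*n-1-(2*n-1-(i.val-1)-1), by omega⟩ : Fin (2*n)) = i := by
        ext; simp; omega
      have e2 : bvec n τ ⟨2*n-1-(i.val-1)-1, by omega⟩ = bvec n τ ⟨i.val-1, by omega⟩ := by
        unfold bvec
        simp only
        rw [show (2*n-1-(i.val-1)-1) % 2 = (i.val-1) % 2 by omega]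
      simp only [smap, rmap, Rmap, if_neg h0, if_neg hne, e1, e2]
      abel
  · simp [smap, rmap, Rmap]

theorem pq_sq (n : ℕ) (τ τ' : ℂ) (x : Aq n τ τ') :
    pA n τ τ' (qA n τ τ' (pA n τ τ' (qA n τ τ' x))) = x := by
  induction x using QuotientAddGroup.induction_on with
  | H z => rw [qA_mk, pA_mk, qA_mk, pA_mk, rs_sq]

def P (n : ℕ) (hn : 1 ≤ n) (τ τ' : ℂ) : Equiv.Perm (Aq n τ τ') where
  toFun := pA n τ τ'
  invFun := (pA n τ τ')^[4*n-1]
  left_inv x := by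
    rw [← Function.iterate_succ_apply, show (4*n-1).succ = 4*n by omega, pA_4n n hn]
  right_inv x := by
    rw [← Function.iterate_succ_apply' (pA n τ τ'), show (4*n-1).succ = 4*n by omega, pA_4n n hn]

def Q (n : ℕ) (τ τ' : ℂ) : Equiv.Perm (Aq n τ τ') where
  toFun := qA n τ τ'
  invFun := qA n τ τ'
  left_inv := qA_qA n τ τ'
  right_inv := qA_qA n τ τ'

theorem P_pow_apply (n : ℕ) (hn : 1 ≤ n) (τ τ' : ℂ) (k : ℕ) (x : Aq n τ τ') :
    (P n hn τ τ' ^ k) x = (pA n τ τ')^[k] x := by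
  rw [Equiv.Perm.coe_pow]; rfl

theorem P_pow (n : ℕ) (hn : 1 ≤ n) (τ τ' : ℂ) : P n hn τ τ' ^ (4*n) = 1 := by
  ext x
  rw [P_pow_apply, pA_4n n hn]; rfl

theorem Q_mul (n : ℕ) (τ τ' : ℂ) : Q n τ τ' * Q n τ τ' = 1 := by
  ext x
  exact qA_qA n τ τ' x

theorem PQ_sq (n : ℕ) (hn : 1 ≤ n) (τ τ' : ℂ) :
    P n hn τ τ' * Q n τ τ' * (P n hn τ τ' * Q n τ τ') = 1 := by
  ext x
  exact pq_sq n τ τ' x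

theorem dihedral_lift {G : Type*} [Group G] (N : ℕ) [NeZero N] (p q : G) (hp : p ^ N = 1)
    (hq : q * q = 1) (hpq : p * q * (p * q) = 1) :
    ∃ φ : DihedralGroup N →* G, (∀ i, φ (DihedralGroup.r i) = p ^ i.val) ∧
      ∀ i, φ (DihedralGroup.sr i) = q * p ^ i.val := by
  have hadd : ∀ i j : ZMod N, p ^ (i + j).val = p ^ i.val * p ^ j.val := by
    intro i j
    rw [ZMod.val_add, ← pow_add]
    exact (pow_eq_pow_mod _ hp).symm
  have hq' : q⁻¹ = q := inv_eq_of_mul_eq_one_left hq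
  have hc : SemiconjBy q p⁻¹ p := by
    show q * p⁻¹ = p * q
    have := inv_eq_of_mul_eq_one_left hpq
    rw [← this, mul_inv_rev, hq']
  have hcomm : ∀ k : ℕ, p ^ k * q = q * (p ^ k)⁻¹ := by
    intro k
    have := (hc.pow_right k)
    rw [← inv_pow]
    exact this.symm
  have hsub : ∀ i j : ZMod N, p ^ (j - i).val = (p ^ i.val)⁻¹ * p ^ j.val := by
    intro i j
    rw [eq_inv_mul_iff_mul_eq, ← hadd]
    congr 2
    ring
  refine ⟨MonoidHom.mk' (fun g => match g with
    | DihedralGroup.r i => p ^ i.val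
    | DihedralGroup.sr i => q * p ^ i.val) ?_, fun i => rfl, fun i => rfl⟩
  rintro (i | i) (j | j)
  · simp only [DihedralGroup.r_mul_r, hadd]
  · simp only [DihedralGroup.r_mul_sr, hsub]
    rw [← mul_assoc, ← mul_assoc, hcomm]
  · simp only [DihedralGroup.sr_mul_r, hadd, mul_assoc]
  · simp only [DihedralGroup.sr_mul_sr, hsub]
    rw [show q * p ^ i.val * (q * p ^ j.val) = q * (p ^ i.val * q) * p ^ j.val by group, hcomm,
      ← mul_assoc, hq, one_mul]

def IsAff {A : Type*} [AddCommGroup A] (f : Equiv.Perm A) : Prop :=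
  ∃ α : A →+ A, ∃ a : A, ∀ x, f x = α x + a

theorem IsAff.mul {A : Type*} [AddCommGroup A] {f g : Equiv.Perm A} (hf : IsAff f) (hg : IsAff g) :
    IsAff (f * g) := by
  obtain ⟨α, a, hα⟩ := hf
  obtain ⟨β, b, hβ⟩ := hg
  refine ⟨α.comp β, α b + a, fun x => ?_⟩
  rw [Equiv.Perm.mul_apply, hβ, hα, map_add, add_assoc]; rfl

theorem IsAff.pow {A : Type*} [AddCommGroup A] {f : Equiv.Perm A} (hf : IsAff f) (k : ℕ) :
    IsAff (f ^ k) := by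
  induction k with
  | zero => exact ⟨AddMonoidHom.id A, 0, fun x => by simp⟩
  | succ k ih => rw [pow_succ]; exact ih.mul hf

theorem IsAff.equiv {A : Type*} [AddCommGroup A] {f : Equiv.Perm A} (hf : IsAff f) :
    ∃ α : A ≃+ A, ∃ a : A, ∀ x, f x = α x + a := by
  obtain ⟨α, a, h⟩ := hf
  have hb : Function.Bijective α := by
    have : (α : A → A) = (f.trans (Equiv.subRight a)) := by
      funext x
      simp [h]
    rw [this]
    exact Equiv.bijective _
  exact ⟨AddEquiv.ofBijective α hb, a, h⟩

def piA (n : ℕ) (τ τ' : ℂ) : Aq n τ τ' →+ Ell τ' :=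
  QuotientAddGroup.lift _ (AddMonoidHom.snd _ _) (by
    unfold wsub
    rw [AddSubgroup.closure_le]
    rintro x rfl
    rfl)

theorem piA_mk (n : ℕ) (τ τ' : ℂ) (z : Aprime n τ τ') : piA n τ τ' (z : Aq n τ τ') = z.2 := rfl

theorem piA_pow (n : ℕ) (hn : 1 ≤ n) (τ τ' : ℂ) (k : ℕ) (x : Aq n τ τ') :
    piA n τ τ' ((P n hn τ τ' ^ k) x) = piA n τ τ' x + k • cE' n τ' := by
  rw [P_pow_apply]
  induction x using QuotientAddGroup.induction_on with
  | H z => rw [pA_iter_mk, piA_mk, piA_mk, rmap_iter_snd]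

theorem piA_Q (n : ℕ) (τ τ' : ℂ) (x : Aq n τ τ') :
    piA n τ τ' (Q n τ τ' x) = - piA n τ τ' x := by
  show piA n τ τ' (qA n τ τ' x) = _
  induction x using QuotientAddGroup.induction_on with
  | H z => rw [qA_mk, piA_mk, piA_mk]; rfl

theorem P_free (n : ℕ) (hn : 1 ≤ n) (τ τ' : ℂ) (hτ' : τ'.im ≠ 0) (k : ℕ) (h0 : k ≠ 0)
    (hk : k < 4*n) (x : Aq n τ τ') : (P n hn τ τ' ^ k) x ≠ x := by
  intro h
  have h1 := piA_pow n hn τ τ' k x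
  rw [h, left_eq_add, nsmul_c] at h1
  obtain ⟨m, -, hm, -⟩ := Ell_zero hτ' ((k : ℝ) / (4 * n)) 0 h1 (by push_cast; ring)
  have hn' : (0 : ℝ) < n := by exact_mod_cast hn
  rw [div_eq_iff (by positivity)] at hm
  have hm' : (k : ℤ) = m * (4 * n) := by exact_mod_cast hm
  have h3 : 0 < m := by
    by_contra hc
    have : m * (4 * n : ℤ) ≤ 0 := mul_nonpos_of_nonpos_of_nonneg (by omega) (by positivity)
    omega
  have : 1 * (4 * n : ℤ) ≤ m * (4 * n) := mul_le_mul_of_nonneg_right h3 (by positivity)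
  omega

theorem half_smul_aux (τ : ℂ) (hτ : τ.im ≠ 0) (m : ℤ) (b : ℝ) (hb : ∀ l : ℤ, b ≠ l) (z : ℂ)
    (hz : z = b * τ) : m • ((1/2 : ℂ) : Ell τ) ≠ (z : Ell τ) := by
  intro h
  rw [← sub_eq_zero, ← QuotientAddGroup.mk_zsmul, ← QuotientAddGroup.mk_sub] at h
  obtain ⟨k, l, -, hl⟩ := Ell_zero hτ ((m : ℝ) / 2) (-b) h (by
    rw [hz, zsmul_eq_mul]; push_cast; ring)
  apply hb (-l)
  push_cast
  linarith

theorem not_int_div (p : ℤ) (q : ℕ) (hq : q ≠ 0) (h : ¬ (q : ℤ) ∣ p) (l : ℤ) :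
    ((p : ℝ) / q) ≠ l := by
  intro hl
  rw [div_eq_iff (by exact_mod_cast hq)] at hl
  apply h
  refine ⟨l, ?_⟩
  rw [mul_comm]
  exact_mod_cast hl

theorem Q_free (n : ℕ) (hn : 1 ≤ n) (τ τ' : ℂ) (hτ : τ.im ≠ 0) (x : Aq n τ τ') :
    Q n τ τ' x ≠ x := by
  intro h
  replace h : qA n τ τ' x = x := h
  induction x using QuotientAddGroup.induction_on with
  | H z =>
    rw [qA_mk, Aq_eq] at h
    obtain ⟨m, hm⟩ := h
    have h1 := congrFun (congrArg Prod.fst hm) ⟨0, by omega⟩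
    have h2 := congrFun (congrArg Prod.fst hm) ⟨2*n-1, by omega⟩
    have e1 : (⟨2*n-1-(2*n-1), by omega⟩ : Fin (2*n)) = ⟨0, by omega⟩ := by
      ext; simp
    have e2 : (⟨2*n-1-0, by omega⟩ : Fin (2*n)) = ⟨2*n-1, by omega⟩ := rfl
    simp only [smap, wpt, Prod.fst_sub, Pi.sub_apply, Prod.smul_fst, Pi.smul_apply, e1, e2] at h1 h2
    have h3 := bvec_sub n τ ⟨0, by omega⟩ (by simp; omega)
    simp only [e2] at h3
    rw [h1] at h2
    have h4 : bvec n τ ⟨0, by omega⟩ - bvec n τ ⟨2*n-1, by omega⟩ = 0 := by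
      rw [← sub_eq_zero] at h2
      rw [← neg_eq_zero, ← h2]
      abel
    rw [h4] at h3
    obtain ⟨k, l, hk, -⟩ := Ell_zero hτ (1/2) 0 h3.symm (by push_cast; ring)
    exact not_int_div 1 2 (by norm_num) (by norm_num) k (by push_cast; exact hk)

theorem PQ_free (n : ℕ) (hn : 1 ≤ n) (τ τ' : ℂ) (hτ : τ.im ≠ 0) (x : Aq n τ τ') :
    (P n hn τ τ' * Q n τ τ') x ≠ x := by
  intro h
  replace h : pA n τ τ' (qA n τ τ' x) = x := h
  induction x using QuotientAddGroup.induction_on with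
  | H z =>
    rw [qA_mk, pA_mk, Aq_eq] at h
    obtain ⟨m, hm⟩ := h
    have h1 := congrFun (congrArg Prod.fst hm) ⟨0, by omega⟩
    have e1 : (⟨2*n-1-(2*n-1), by omega⟩ : Fin (2*n)) = ⟨0, by omega⟩ := by
      ext; simp
    have e2 : bvec n τ ⟨2*n-1, by omega⟩ = ((τ/2 : ℂ) : Ell τ) := by
      unfold bvec
      rw [if_neg (by simp; omega)]
    simp only [smap, rmap, Rmap, wpt, Prod.fst_sub, Pi.sub_apply, Prod.smul_fst, Pi.smul_apply,
      if_true, e1, e2] at h1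
    refine half_smul_aux τ hτ m (1/2)
      (fun l => by simpa using not_int_div 1 2 (by norm_num) (by norm_num) l) (τ/2)
      (by push_cast; ring) ?_
    rw [h1]
    abel

def tv (n : ℕ) (τ τ' : ℂ) : Aprime n τ τ' := (fun _ => ((τ/3 : ℂ) : Ell τ), 0)

theorem P_not_trans (n : ℕ) (hn : 1 ≤ n) (τ τ' : ℂ) (hτ : τ.im ≠ 0) (k : ℕ) (h0 : k ≠ 0)
    (hk : k < 4*n) : ¬ ∃ a : Aq n τ τ', ∀ x, (P n hn τ τ' ^ k) x = x + a := by
  rintro ⟨a, ha⟩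
  obtain ⟨i, hi0, hi⟩ : ∃ i : Fin (2*n), ((rmap n τ τ')^[k] 0).1 i = 0 ∧
      ((rmap n τ τ')^[k] (tv n τ τ')).1 i = -((τ/3 : ℂ) : Ell τ) := by
    rcases le_or_gt k (2*n) with h | h
    · refine ⟨⟨0, by omega⟩, ?_, ?_⟩
      · rw [rmap_iter_fst n τ τ' k h, dif_pos (by simp; omega)]
        simp
      · rw [rmap_iter_fst n τ τ' k h, dif_pos (by simp; omega)]
        rfl
    · obtain ⟨j, rfl⟩ : ∃ j, k = j + 2*n := ⟨k - 2*n, by omega⟩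
      refine ⟨⟨2*n-1, by omega⟩, ?_, ?_⟩
      · rw [Function.iterate_add_apply, rmap_iter_fst n τ τ' j (by omega),
          dif_neg (by simp; omega), rmap_2n_fst]
        simp
      · rw [Function.iterate_add_apply, rmap_iter_fst n τ τ' j (by omega),
          dif_neg (by simp; omega), rmap_2n_fst]
        rfl
  have h1 := ha ((0 : Aprime n τ τ') : Aq n τ τ')
  have h2 := ha ((tv n τ τ' : Aprime n τ τ') : Aq n τ τ')
  rw [P_pow_apply, pA_iter_mk] at h1 h2
  replace h1 := h1.trans (zero_add a)
  rw [← h1, ← QuotientAddGroup.mk_add, Aq_eq] at h2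
  obtain ⟨m, hm⟩ := h2
  have h3 := congrFun (congrArg Prod.fst hm) i
  simp only [Prod.fst_sub, Prod.fst_add, Pi.sub_apply, Pi.add_apply, hi0, hi, wpt, Prod.smul_fst,
    Pi.smul_apply] at h3
  refine half_smul_aux τ hτ m (2/3)
      (fun l => by simpa using not_int_div 2 3 (by norm_num) (by norm_num) l) (τ/3 + τ/3)
      (by push_cast; ring) ?_
  rw [h3, tv, QuotientAddGroup.mk_add]
  abel

theorem QP_not_trans (n : ℕ) (hn : 1 ≤ n) (τ τ' : ℂ) (hτ' : τ'.im ≠ 0) (k : ℕ) :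
    ¬ ∃ a : Aq n τ τ', ∀ x, (Q n τ τ' * P n hn τ τ' ^ k) x = x + a := by
  rintro ⟨a, ha⟩
  have key : ∀ x, -(piA n τ τ' x + k • cE' n τ') = piA n τ τ' x + piA n τ τ' a := by
    intro x
    rw [← map_add, ← ha x, Equiv.Perm.mul_apply, piA_Q, piA_pow]
  have h1 := key 0
  have h2 := key (((0, ((1/3 : ℂ) : Ell τ')) : Aprime n τ τ') : Aq n τ τ')
  rw [map_zero, zero_add, zero_add] at h1
  rw [← h1, piA_mk] at h2
  simp only at h2
  have h3 : ((1/3 + 1/3 : ℂ) : Ell τ') = 0 := by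
    rw [QuotientAddGroup.mk_add]
    rw [← sub_eq_zero] at h2
    rw [← neg_eq_zero, ← h2]
    abel
  obtain ⟨l, -, hl, -⟩ := Ell_zero hτ' (2/3) 0 h3 (by push_cast; ring)
  exact not_int_div 2 3 (by norm_num) (by norm_num) l (by push_cast; exact hl)

/-- D_{4n} embeds into the bijections of A = A'/⟨w⟩, acting by affine
transformations, freely, and without translations. -/
theorem stmt_16 (n : ℕ) (hn : 1 ≤ n) (τ τ' : ℂ) (hτ : τ.im ≠ 0) (hτ' : τ'.im ≠ 0) :
    ∃ φ : DihedralGroup (4*n) →* Equiv.Perm (Aq n τ τ'),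
      Function.Injective φ ∧
      (∀ g : DihedralGroup (4*n), ∃ α : Aq n τ τ' ≃+ Aq n τ τ', ∃ a : Aq n τ τ',
        ∀ x : Aq n τ τ', φ g x = α x + a) ∧
      (∀ g : DihedralGroup (4*n), g ≠ 1 → ∀ x : Aq n τ τ', φ g x ≠ x) ∧
      (∀ g : DihedralGroup (4*n), g ≠ 1 →
        ¬ ∃ a : Aq n τ τ', ∀ x : Aq n τ τ', φ g x = x + a) := by
  have : NeZero (4*n) := ⟨by omega⟩
  obtain ⟨φ, hr, hs⟩ := dihedral_lift (4*n) (P n hn τ τ') (Q n τ τ') (P_pow n hn τ τ')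
    (Q_mul n τ τ') (PQ_sq n hn τ τ')
  have hval : ∀ i : ZMod (4*n), DihedralGroup.r i ≠ 1 → i.val ≠ 0 := by
    intro i hi h
    apply hi
    rw [(ZMod.val_eq_zero i).1 h]
    rfl
  have hs0 : φ (DihedralGroup.sr 0) = Q n τ τ' := by
    rw [hs, ZMod.val_zero, pow_zero, mul_one]
  have hr1 : φ (DihedralGroup.r 1) = P n hn τ τ' := by
    rw [hr, ZMod.val_one'' (by omega), pow_one]
  have hconj : ∀ (g h : DihedralGroup (4*n)), (∀ x, φ (h * g * h⁻¹) x ≠ x) → ∀ x, φ g x ≠ x := by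
    intro g h H x hx
    apply H (φ h x)
    rw [← Equiv.Perm.mul_apply, ← map_mul, inv_mul_cancel_right, map_mul, Equiv.Perm.mul_apply, hx]
  have hfree : ∀ g : DihedralGroup (4*n), g ≠ 1 → ∀ x : Aq n τ τ', φ g x ≠ x := by
    rintro (i | i) hg
    · rw [hr]
      exact P_free n hn τ τ' hτ' _ (hval i hg) (ZMod.val_lt i)
    · have hi : ((i.val : ℕ) : ZMod (4*n)) = i := ZMod.natCast_zmod_val i
      rcases Nat.even_or_odd' i.val with ⟨j, hj | hj⟩
      · apply hconj _ (DihedralGroup.r j)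
        have : DihedralGroup.r (j : ZMod (4*n)) * DihedralGroup.sr i * (DihedralGroup.r j)⁻¹
            = DihedralGroup.sr 0 := by
          rw [DihedralGroup.inv_r, DihedralGroup.r_mul_sr, DihedralGroup.sr_mul_r, ← hi, hj]
          congr 1
          push_cast
          ring
        rw [this, hs0]
        exact Q_free n hn τ τ' hτ
      · apply hconj _ (DihedralGroup.r (j + 1 : ZMod (4*n)))
        have : DihedralGroup.r (j + 1 : ZMod (4*n)) * DihedralGroup.sr i *
            (DihedralGroup.r (j + 1 : ZMod (4*n)))⁻¹ = DihedralGroup.r 1 * DihedralGroup.sr 0 := by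
          rw [DihedralGroup.inv_r, DihedralGroup.r_mul_sr, DihedralGroup.sr_mul_r, ← hi, hj,
            DihedralGroup.r_mul_sr]
          congr 1
          push_cast
          ring
        rw [this, map_mul, hr1, hs0]
        exact PQ_free n hn τ τ' hτ
  have hP : IsAff (P n hn τ τ') := ⟨RA n τ τ', _, fun x => rfl⟩
  have hQ : IsAff (Q n τ τ') := ⟨SA n τ τ', _, fun x => rfl⟩
  refine ⟨φ, ?_, ?_, hfree, ?_⟩
  · rw [injective_iff_map_eq_one]
    intro g hg
    by_contra hne
    exact hfree g hne 0 (by rw [hg]; rfl)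
  · rintro (i | i)
    · rw [hr]; exact (hP.pow _).equiv
    · rw [hs]; exact (hQ.mul (hP.pow _)).equiv
  · rintro (i | i) hg
    · rw [hr]
      exact P_not_trans n hn τ τ' hτ _ (hval i hg) (ZMod.val_lt i)
    · rw [hs]
      exact QP_not_trans n hn τ τ' hτ' _
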